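/- If α, α', β, β' are n-dimensional finite signed vector measures with LH(α) = LH(α') and LH(β) = LH(β'), then LH(α × β) = LH(α' × β'). Hence the Lorenz product of Lorenz hulls, H₁H₂ := LH(α × β) for any α, β with LH(α) = H₁, LH(β) = H₂, is well-defined. -/

import Mathlib

open MeasureTheory

/-- The Lorenz hull of an `n`-dimensional finite signed vector measure:
the convex hull of its range in `ℝⁿ`. -/
def lorenzHull {n : ℕ} {S : Type*} [MeasurableSpace S]
    (α : Fin n → MeasureTheory.SignedMeasure S) : Set (Fin n → ℝ) :=
  convexHull ℝ {x | ∃ A : Set S, MeasurableSet A ∧ x = fun i => α i A}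

/-!
A finite vector measure in a finite-dimensional space has a density `g` with respect to a finite
positive measure `μ`, and the support function of the convex hull of its range is
`c ↦ ∫ (c ∘ g)⁺ ∂μ`. By Fubini, the support function of the hull of a product measure is an integral
of support functions of the hull of either factor, hence monotone in the hulls of both factors.

The hull is determined by its support function even before one knows that it is closed. Let `z`
satisfy all the support inequalities and suppose that `z` lies outside the hull. A functional `c`
properly separating `z` from the hull attains its support bound at `z`, so that differentiating the
support inequalities at `c` shows that `z`, minus the value of the vector measure on `{c ∘ g > 0}`,
satisfies the support inequalities of its restriction to `{c ∘ g = 0}`. The range of that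
restriction lies in the kernel of `c`, hence spans a smaller space, and one concludes by induction
on the dimension of the span.
-/

section

open Set Filter Topology
open scoped Pointwise

section Separation

variable {V : Type*} [NormedAddCommGroup V] [NormedSpace ℝ V] [FiniteDimensional ℝ V]

lemma nonempty_interior_preimage_span {C : Set V} (hC : Convex ℝ C) (h₀ : (0 : V) ∈ C) :
    (interior ((↑) ⁻¹' C : Set (Submodule.span ℝ C))).Nonempty := by
  have hconv : Convex ℝ ((↑) ⁻¹' C : Set (Submodule.span ℝ C)) :=
    hC.linear_preimage (Submodule.span ℝ C).subtype
  rw [hconv.interior_nonempty_iff_affineSpan_eq_top, ← AffineSubspace.coe_eq_univ_iff,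
    ← insert_eq_of_mem (mem_preimage.2 h₀ : (0 : Submodule.span ℝ C) ∈ _), affineSpan_insert_zero,
    Submodule.span_span_coe_preimage, Submodule.top_coe]

lemma exists_forall_le_and_exists_lt_of_notMem {C : Set V} (hC : Convex ℝ C) (h₀ : (0 : V) ∈ C)
    {z : V} (hz : z ∉ C) :
    ∃ c : StrongDual ℝ V, (∀ y ∈ C, c y ≤ c z) ∧ ∃ y ∈ C, c y < c z := by
  by_cases hzC : z ∈ Submodule.span ℝ C
  · obtain ⟨f, hf₀, hf⟩ := geometric_hahn_banach_of_nonempty_interior_point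
      (hC.linear_preimage (Submodule.span ℝ C).subtype) (x := ⟨z, hzC⟩)
      (fun h => hz (interior_subset h :)) (nonempty_interior_preimage_span hC h₀)
    obtain ⟨c, hc, -⟩ := exists_extension_norm_eq _ f
    have hle : ∀ y ∈ C, c y ≤ c z := fun y hy => by
      simpa [← hc] using hf ⟨y, Submodule.subset_span hy⟩ hy
    refine ⟨c, hle, ?_⟩
    by_contra! hge
    have hcC : ∀ y ∈ C, c y = 0 := fun y hy => by
      have hcz : c z = 0 := by simpa using (hle 0 h₀).antisymm' (hge 0 h₀)
      rw [(hle y hy).antisymm (hge y hy), hcz]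
    refine hf₀ (ContinuousLinearMap.ext fun w => ?_)
    have hker : Submodule.span ℝ C ≤ c.ker := Submodule.span_le.2 hcC
    simpa [← hc] using hker w.2
  · obtain ⟨c, u, hcu, huz⟩ := geometric_hahn_banach_closed_point
      (Submodule.span ℝ C).convex (Submodule.closed_of_finiteDimensional _) hzC
    have hlt : ∀ y ∈ C, c y < c z := fun y hy => (hcu y (Submodule.subset_span hy)).trans huz
    exact ⟨c, fun y hy => (hlt y hy).le, 0, h₀, hlt 0 h₀⟩

end Separation

variable {X : Type*} [MeasurableSpace X] {μ : Measure X}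

lemma range_vectorMeasure_eq_image {M : Type*} [AddCommMonoid M] [TopologicalSpace M]
    (α : VectorMeasure X M) :
    range α = α '' {A | MeasurableSet A} := by
  refine (range_subset_iff.2 fun A => ?_).antisymm (image_subset_range _ _)
  by_cases hA : MeasurableSet A
  · exact mem_image_of_mem α hA
  · exact ⟨∅, .empty, by rw [α.empty, α.not_measurable hA]⟩

lemma hasDerivWithinAt_max_add_mul_zero (x y : ℝ) :
    HasDerivWithinAt (fun ε => max (x + ε * y) 0)
      ((if 0 < x then y else 0) + if x = 0 then max y 0 else 0) (Ioi 0) 0 := by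
  have hlin : HasDerivAt (fun ε : ℝ => x + ε * y) y 0 := by
    simpa using ((hasDerivAt_id (0 : ℝ)).mul_const y).const_add x
  have hlim : Tendsto (fun ε : ℝ => x + ε * y) (𝓝[>] 0) (𝓝 x) := by
    simpa using hlin.continuousAt.tendsto.mono_left nhdsWithin_le_nhds
  obtain hx | rfl | hx := lt_trichotomy x 0
  · refine HasDerivWithinAt.congr_of_eventuallyEq (f := fun _ => 0) ?_ ?_ (by simp [hx.le])
    · simpa [hx.not_gt, hx.ne] using hasDerivWithinAt_const (0 : ℝ) (Ioi 0) (0 : ℝ)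
    · filter_upwards [hlim.eventually_lt_const hx] with ε hε using max_eq_right hε.le
  · refine HasDerivWithinAt.congr (f := fun ε => ε * max y 0) ?_ (fun ε hε => ?_) (by simp)
    · simpa using ((hasDerivAt_id (0 : ℝ)).mul_const (max y 0)).hasDerivWithinAt
    · simp [mul_max_of_nonneg _ _ (mem_Ioi.1 hε).le]
  · refine HasDerivWithinAt.congr_of_eventuallyEq (f := fun ε => x + ε * y) ?_ ?_ (by simp [hx.le])
    · simpa [hx, hx.ne'] using hlin.hasDerivWithinAt
    · filter_upwards [hlim.eventually_const_lt hx] with ε hε using max_eq_left hε.le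

lemma hasDerivWithinAt_integral_max_add_mul_zero {u v : X → ℝ} (hum : Measurable u)
    (hu : Integrable u μ) (hv : Integrable v μ) :
    HasDerivWithinAt (fun ε => ∫ x, max (u x + ε * v x) 0 ∂μ)
      (∫ x in {x | 0 < u x}, v x ∂μ + ∫ x in {x | u x = 0}, max (v x) 0 ∂μ) (Ioi 0) 0 := by
  have hP : MeasurableSet {x | 0 < u x} := measurableSet_lt measurable_const hum
  have hZ : MeasurableSet {x | u x = 0} := measurableSet_eq_fun hum measurable_const
  have hint (ε : ℝ) : Integrable (fun x => max (u x + ε * v x) 0) μ :=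
    (hu.add (hv.const_mul ε)).pos_part
  rw [hasDerivWithinAt_iff_tendsto_slope' self_notMem_Ioi, ← integral_indicator hP,
    ← integral_indicator hZ, ← integral_add (hv.indicator hP) (hv.pos_part.indicator hZ)]
  have hslope (ε : ℝ) : slope (fun ε => ∫ x, max (u x + ε * v x) 0 ∂μ) 0 ε =
      ∫ x, slope (fun ε => max (u x + ε * v x) 0) 0 ε ∂μ := by
    simp only [slope_def_field]
    rw [integral_div, integral_sub (hint ε) (hint 0)]
  rw [funext hslope]
  refine tendsto_integral_filter_of_dominated_convergence (fun x => |v x|) ?_ ?_ hv.abs ?_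
  · refine Eventually.of_forall fun ε => ?_
    simp only [slope_def_field]
    exact (((hint ε).sub (hint 0)).div_const _).aestronglyMeasurable
  · filter_upwards [self_mem_nhdsWithin] with ε (hε : 0 < ε)
    refine Eventually.of_forall fun x => ?_
    rw [slope_def_field, sub_zero, norm_div, Real.norm_of_nonneg hε.le, div_le_iff₀ hε]
    calc |max (u x + ε * v x) 0 - max (u x + 0 * v x) 0|
        ≤ |(u x + ε * v x) - (u x + 0 * v x)| := abs_max_sub_max_le_abs _ _ _
      _ = |v x| * ε := by rw [zero_mul, add_sub_add_left_eq_sub, sub_zero, abs_mul, abs_of_pos hε,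
          mul_comm]
  · refine Eventually.of_forall fun x => ?_
    simpa [indicator_apply] using (hasDerivWithinAt_iff_tendsto_slope' self_notMem_Ioi).1
      (hasDerivWithinAt_max_add_mul_zero (u x) (v x))

section Density

variable {V : Type*} [NormedAddCommGroup V] [NormedSpace ℝ V]

/-- The support function `c ↦ ∫ (c ∘ g)⁺ ∂μ` of the convex hull of the range of the vector measure
with density `g` with respect to `μ`. -/
noncomputable def supportIntegral (μ : Measure X) (g : X → V) (c : StrongDual ℝ V) : ℝ :=
  ∫ x, max (c (g x)) 0 ∂μ

lemma measurableSet_pos_apply {g : X → V} (hgm : StronglyMeasurable g) (c : StrongDual ℝ V) :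
    MeasurableSet {x | 0 < c (g x)} :=
  measurableSet_lt measurable_const (c.continuous.comp_stronglyMeasurable hgm).measurable

lemma zero_mem_convexHull_range (α : VectorMeasure X V) : (0 : V) ∈ convexHull ℝ (range α) :=
  subset_convexHull ℝ _ ⟨∅, α.empty⟩

lemma withDensityᵥ_indicator_apply {g : X → V} (hg : Integrable g μ) {Z A : Set X}
    (hZ : MeasurableSet Z) (hA : MeasurableSet A) :
    μ.withDensityᵥ (Z.indicator g) A = μ.withDensityᵥ g (A ∩ Z) := by
  rw [withDensityᵥ_apply (hg.indicator hZ) hA, withDensityᵥ_apply hg (hA.inter hZ),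
    setIntegral_indicator hZ]

lemma vadd_convexHull_range_withDensityᵥ_indicator_subset {g : X → V} (hg : Integrable g μ)
    {P Z : Set X} (hP : MeasurableSet P) (hZ : MeasurableSet Z) (hPZ : Disjoint P Z) :
    μ.withDensityᵥ g P +ᵥ convexHull ℝ (range (μ.withDensityᵥ (Z.indicator g))) ⊆
      convexHull ℝ (range (μ.withDensityᵥ g)) := by
  rw [← convexHull_vadd, range_vectorMeasure_eq_image (μ.withDensityᵥ (Z.indicator g))]
  refine convexHull_mono ?_
  rintro _ ⟨_, ⟨A, hA, rfl⟩, rfl⟩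
  refine ⟨P ∪ A ∩ Z, ?_⟩
  rw [VectorMeasure.of_union (hPZ.mono_right inter_subset_right) hP (hA.inter hZ),
    ← withDensityᵥ_indicator_apply hg hZ hA]
  rfl

variable [CompleteSpace V]

lemma apply_withDensityᵥ {g : X → V} (hg : Integrable g μ) (c : StrongDual ℝ V) {A : Set X}
    (hA : MeasurableSet A) : c (μ.withDensityᵥ g A) = ∫ x in A, c (g x) ∂μ := by
  rw [withDensityᵥ_apply hg hA, c.integral_comp_comm hg.integrableOn]

lemma apply_withDensityᵥ_pos_eq_supportIntegral {g : X → V} (hgm : StronglyMeasurable g)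
    (hg : Integrable g μ) (c : StrongDual ℝ V) :
    c (μ.withDensityᵥ g {x | 0 < c (g x)}) = supportIntegral μ g c := by
  have hP := measurableSet_pos_apply hgm c
  rw [apply_withDensityᵥ hg c hP, supportIntegral, ← integral_indicator hP]
  congr 1 with x
  by_cases hx : 0 < c (g x)
  · simp [hx, hx.le]
  · simp [hx, not_lt.1 hx]

lemma apply_le_supportIntegral_of_mem_convexHull {g : X → V} (hg : Integrable g μ) {z : V}
    (hz : z ∈ convexHull ℝ (range (μ.withDensityᵥ g))) (c : StrongDual ℝ V) :
    c z ≤ supportIntegral μ g c := by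
  suffices h : range (μ.withDensityᵥ g) ⊆ {z | c z ≤ supportIntegral μ g c} from
    convexHull_min h (convex_halfSpace_le c.isBoundedLinearMap.toIsLinearMap _) hz
  rw [range_vectorMeasure_eq_image]
  rintro _ ⟨A, hA, rfl⟩
  have hc := c.integrable_comp hg
  calc c (μ.withDensityᵥ g A) = ∫ x in A, c (g x) ∂μ := apply_withDensityᵥ hg c hA
    _ ≤ ∫ x in A, max (c (g x)) 0 ∂μ :=
        integral_mono hc.integrableOn hc.pos_part.integrableOn fun x => le_max_left _ _
    _ ≤ supportIntegral μ g c :=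
        setIntegral_le_integral hc.pos_part (Eventually.of_forall fun x => le_max_right _ _)

lemma hasDerivWithinAt_supportIntegral_add_smul {g : X → V} (hgm : StronglyMeasurable g)
    (hg : Integrable g μ) (c e : StrongDual ℝ V) :
    HasDerivWithinAt (fun ε : ℝ => supportIntegral μ g (c + ε • e))
      (e (μ.withDensityᵥ g {x | 0 < c (g x)}) +
        supportIntegral μ ({x | c (g x) = 0}.indicator g) e) (Ioi 0) 0 := by
  have hcm : Measurable fun x => c (g x) := (c.continuous.comp_stronglyMeasurable hgm).measurable
  have hZ : MeasurableSet {x | c (g x) = 0} := measurableSet_eq_fun hcm measurable_const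
  have hface : supportIntegral μ ({x | c (g x) = 0}.indicator g) e =
      ∫ x in {x | c (g x) = 0}, max (e (g x)) 0 ∂μ := by
    rw [supportIntegral, ← integral_indicator hZ]
    congr 1 with x
    by_cases hx : c (g x) = 0 <;> simp [hx]
  rw [apply_withDensityᵥ hg e (measurableSet_pos_apply hgm c), hface]
  simpa [supportIntegral] using hasDerivWithinAt_integral_max_add_mul_zero hcm
    (c.integrable_comp hg) (e.integrable_comp hg)

lemma apply_sub_le_supportIntegral_indicator {g : X → V} (hgm : StronglyMeasurable g)
    (hg : Integrable g μ) {z : V} (hz : ∀ c, c z ≤ supportIntegral μ g c) {c : StrongDual ℝ V}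
    (hc : c z = supportIntegral μ g c) (e : StrongDual ℝ V) :
    e (z - μ.withDensityᵥ g {x | 0 < c (g x)}) ≤
      supportIntegral μ ({x | c (g x) = 0}.indicator g) e := by
  rw [map_sub, sub_le_iff_le_add']
  refine ge_of_tendsto ((hasDerivWithinAt_iff_tendsto_slope' self_notMem_Ioi).1
    (hasDerivWithinAt_supportIntegral_add_smul hgm hg c e)) ?_
  filter_upwards [self_mem_nhdsWithin] with ε (hε : 0 < ε)
  have hle : c z + ε * e z ≤ supportIntegral μ g (c + ε • e) := by simpa using hz (c + ε • e)
  rw [slope_def_field, zero_smul, add_zero, sub_zero, le_div_iff₀ hε, ← hc]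
  linarith

lemma span_range_withDensityᵥ_indicator_lt {g : X → V} (hg : Integrable g μ) {c : StrongDual ℝ V}
    (hZ : MeasurableSet {x | c (g x) = 0}) {v : V}
    (hv : v ∈ convexHull ℝ (range (μ.withDensityᵥ g))) (hcv : c v ≠ 0) :
    Submodule.span ℝ (range (μ.withDensityᵥ ({x | c (g x) = 0}.indicator g))) <
      Submodule.span ℝ (range (μ.withDensityᵥ g)) := by
  rw [range_vectorMeasure_eq_image (μ.withDensityᵥ ({x | c (g x) = 0}.indicator g))]
  refine SetLike.lt_iff_le_and_exists.2 ⟨Submodule.span_le.2 ?_, v,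
    convexHull_min Submodule.subset_span (Submodule.convex _) hv, fun hvZ => hcv ?_⟩
  · rintro _ ⟨A, hA, rfl⟩
    rw [withDensityᵥ_indicator_apply hg hZ hA]
    exact Submodule.subset_span ⟨_, rfl⟩
  · suffices h : Submodule.span ℝ _ ≤ c.ker from h hvZ
    refine Submodule.span_le.2 ?_
    rintro _ ⟨A, hA, rfl⟩
    rw [withDensityᵥ_indicator_apply hg hZ hA]
    change c _ = 0
    rw [apply_withDensityᵥ hg c (hA.inter hZ)]
    exact setIntegral_eq_zero_of_forall_eq_zero fun x hx => hx.2

end Density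

section Closed

variable {V : Type*} [NormedAddCommGroup V] [NormedSpace ℝ V] [FiniteDimensional ℝ V]

lemma mem_convexHull_range_of_forall_apply_le {g : X → V} (hgm : StronglyMeasurable g)
    (hg : Integrable g μ) {z : V} (hz : ∀ c, c z ≤ supportIntegral μ g c) :
    z ∈ convexHull ℝ (range (μ.withDensityᵥ g)) := by
  have := FiniteDimensional.complete ℝ V
  induction hd : Module.finrank ℝ (Submodule.span ℝ (range (μ.withDensityᵥ g)))
    using Nat.strong_induction_on generalizing g z with | h d ih =>
  by_contra hzC
  obtain ⟨c, hcle, y, hy, hcy⟩ := exists_forall_le_and_exists_lt_of_notMem (convex_convexHull ℝ _)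
    (zero_mem_convexHull_range _) hzC
  set P : Set X := {x | 0 < c (g x)}
  set Z : Set X := {x | c (g x) = 0}
  have hP : MeasurableSet P := measurableSet_pos_apply hgm c
  have hZ : MeasurableSet Z := measurableSet_eq_fun
    (c.continuous.comp_stronglyMeasurable hgm).measurable measurable_const
  have hPmem : μ.withDensityᵥ g P ∈ convexHull ℝ (range (μ.withDensityᵥ g)) :=
    subset_convexHull ℝ _ (mem_range_self P)
  have hPz : c (μ.withDensityᵥ g P) = c z := (hcle _ hPmem).antisymm <|
    (hz c).trans_eq (apply_withDensityᵥ_pos_eq_supportIntegral hgm hg c).symm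
  have hcz : c z = supportIntegral μ g c :=
    hPz.symm.trans (apply_withDensityᵥ_pos_eq_supportIntegral hgm hg c)
  obtain ⟨v, hv, hcv⟩ : ∃ v ∈ convexHull ℝ (range (μ.withDensityᵥ g)), c v ≠ 0 := by
    by_contra! hzero
    exact hcy.ne ((hzero y hy).trans ((hzero _ hPmem).symm.trans hPz))
  have hface : z - μ.withDensityᵥ g P ∈ convexHull ℝ (range (μ.withDensityᵥ (Z.indicator g))) :=
    ih _ (hd ▸ Submodule.finrank_lt_finrank_of_lt
        (span_range_withDensityᵥ_indicator_lt hg hZ hv hcv))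
      (hgm.indicator hZ) (hg.indicator hZ)
      (apply_sub_le_supportIntegral_indicator hgm hg hz hcz) rfl
  have hPZ : Disjoint P Z := disjoint_left.2 fun x hxP hxZ => hxP.ne' hxZ
  exact hzC <| vadd_convexHull_range_withDensityᵥ_indicator_subset hg hP hZ hPZ
    ⟨_, hface, add_sub_cancel _ _⟩

lemma convexHull_range_withDensityᵥ_subset_iff {X' : Type*} [MeasurableSpace X'] {μ' : Measure X'}
    {g : X → V} {g' : X' → V} (hgm : StronglyMeasurable g) (hg : Integrable g μ)
    (hgm' : StronglyMeasurable g') (hg' : Integrable g' μ') :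
    convexHull ℝ (range (μ.withDensityᵥ g)) ⊆ convexHull ℝ (range (μ'.withDensityᵥ g')) ↔
      ∀ c, supportIntegral μ g c ≤ supportIntegral μ' g' c := by
  have := FiniteDimensional.complete ℝ V
  refine ⟨fun h c => ?_, fun h z hz => mem_convexHull_range_of_forall_apply_le hgm' hg' fun c =>
    (apply_le_supportIntegral_of_mem_convexHull hg hz c).trans (h c)⟩
  rw [← apply_withDensityᵥ_pos_eq_supportIntegral hgm hg]
  exact apply_le_supportIntegral_of_mem_convexHull hg' (h (subset_convexHull ℝ _ ⟨_, rfl⟩)) c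

end Closed

lemma withDensityᵥ_rnDeriv_eq_of_totalVariation_le {σ : SignedMeasure X} [SigmaFinite μ]
    (h : σ.totalVariation ≤ μ) : μ.withDensityᵥ (σ.rnDeriv μ) = σ := by
  refine SignedMeasure.withDensityᵥ_rnDeriv_eq σ μ
    (VectorMeasure.AbsolutelyContinuous.mk fun A hA hμA => ?_)
  rw [Measure.toENNRealVectorMeasure_apply_measurable hA] at hμA
  exact σ.null_of_totalVariation_zero (Measure.absolutelyContinuous_of_le h hμA)

lemma exists_eq_withDensityᵥ {E : Type*} [NormedAddCommGroup E] [NormedSpace ℝ E]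
    [FiniteDimensional ℝ E] (α : VectorMeasure X E) :
    ∃ (μ : Measure X) (a : X → E), IsFiniteMeasure μ ∧ StronglyMeasurable a ∧ Integrable a μ ∧
      α = μ.withDensityᵥ a := by
  have := FiniteDimensional.complete ℝ E
  let b := Module.finBasis ℝ E
  let σ i : SignedMeasure X := α.mapRange (b.coord i).toAddMonoidHom
    (b.coord i).continuous_of_finiteDimensional
  let μ : Measure X := ∑ i, (σ i).totalVariation
  have hσ i : μ.withDensityᵥ ((σ i).rnDeriv μ) = σ i :=
    withDensityᵥ_rnDeriv_eq_of_totalVariation_le <| Finset.single_le_sum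
      (f := fun i => (σ i).totalVariation) (fun _ _ => Measure.zero_le _) (Finset.mem_univ i)
  have hint i : Integrable (fun x => (σ i).rnDeriv μ x • b i) μ :=
    (SignedMeasure.integrable_rnDeriv _ _).smul_const _
  have ha : Integrable (fun x => ∑ i, (σ i).rnDeriv μ x • b i) μ :=
    integrable_finsetSum _ fun i _ => hint i
  refine ⟨μ, _, inferInstance, ?_, ha, ?_⟩
  · exact Finset.stronglyMeasurable_fun_sum _ fun i _ =>
      (SignedMeasure.measurable_rnDeriv _ _).stronglyMeasurable.smul_const _
  · ext A hA
    rw [withDensityᵥ_apply ha hA]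
    calc α A = ∑ i, σ i A • b i := (b.sum_repr (α A)).symm
      _ = ∑ i, (∫ x in A, (σ i).rnDeriv μ x ∂μ) • b i := by
          simp_rw [← withDensityᵥ_apply (SignedMeasure.integrable_rnDeriv _ _) hA, hσ]
      _ = ∫ x in A, ∑ i, (σ i).rnDeriv μ x • b i ∂μ := by
          simp_rw [integral_finsetSum _ fun i _ => (hint i).integrableOn, integral_smul_const]

section Product

variable {S S' T T' E F G : Type*}
  [MeasurableSpace S] [MeasurableSpace S'] [MeasurableSpace T] [MeasurableSpace T']
  [NormedAddCommGroup E] [NormedSpace ℝ E] [NormedAddCommGroup F] [NormedSpace ℝ F]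
  [NormedAddCommGroup G] [NormedSpace ℝ G]
  {μ : Measure S} {μ' : Measure S'} {ν : Measure T} {ν' : Measure T'}
  {a : S → E} {a' : S' → E} {b : T → F} {b' : T' → F}

lemma integrable_prod_bilin (M : E →L[ℝ] F →L[ℝ] G) (ha : Integrable a μ) (hb : Integrable b ν) :
    Integrable (fun p : S × T => M (a p.1) (b p.2)) (μ.prod ν) :=
  ha.op_fst_snd (by fun_prop) ⟨‖M‖, M.le_opNorm₂⟩ hb

lemma withDensityᵥ_prod [CompleteSpace E] [CompleteSpace F] [CompleteSpace G]
    [SFinite μ] [SFinite ν] (M : E →L[ℝ] F →L[ℝ] G) (ha : Integrable a μ) (hb : Integrable b ν) :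
    (μ.withDensityᵥ a).prod (ν.withDensityᵥ b) M =
      (μ.prod ν).withDensityᵥ fun p => M (a p.1) (b p.2) := by
  refine VectorMeasure.prod_eq_of_forall_apply_prod fun A B hA hB => ?_
  rw [withDensityᵥ_apply (integrable_prod_bilin M ha hb) (hA.prod hB), withDensityᵥ_apply ha hA,
    withDensityᵥ_apply hb hB, ← Measure.prod_restrict,
    integral_prod_bilin M ha.integrableOn hb.integrableOn]

lemma supportIntegral_prod_mono_left [SFinite μ] [SFinite μ'] [SFinite ν]
    (M : E →L[ℝ] F →L[ℝ] G) (ha : Integrable a μ) (ha' : Integrable a' μ') (hb : Integrable b ν)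
    (h : ∀ c, supportIntegral μ a c ≤ supportIntegral μ' a' c) (c : StrongDual ℝ G) :
    supportIntegral (μ.prod ν) (fun p => M (a p.1) (b p.2)) c ≤
      supportIntegral (μ'.prod ν) (fun p => M (a' p.1) (b p.2)) c := by
  have hint := (c.integrable_comp (integrable_prod_bilin M ha hb)).pos_part
  have hint' := (c.integrable_comp (integrable_prod_bilin M ha' hb)).pos_part
  calc supportIntegral (μ.prod ν) (fun p => M (a p.1) (b p.2)) c
      = ∫ t, supportIntegral μ a (c ∘L M.flip (b t)) ∂ν := integral_prod_symm _ hint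
    _ ≤ ∫ t, supportIntegral μ' a' (c ∘L M.flip (b t)) ∂ν :=
        integral_mono hint.integral_prod_right hint'.integral_prod_right fun t => h _
    _ = supportIntegral (μ'.prod ν) (fun p => M (a' p.1) (b p.2)) c :=
        (integral_prod_symm _ hint').symm

lemma supportIntegral_prod_flip [SFinite μ] [SFinite ν] (M : E →L[ℝ] F →L[ℝ] G)
    (c : StrongDual ℝ G) :
    supportIntegral (ν.prod μ) (fun p => M.flip (b p.1) (a p.2)) c =
      supportIntegral (μ.prod ν) (fun p => M (a p.1) (b p.2)) c :=
  integral_prod_swap fun p : S × T => max (c (M (a p.1) (b p.2))) 0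

lemma supportIntegral_prod_mono [SFinite μ] [SFinite μ'] [SFinite ν] [SFinite ν']
    (M : E →L[ℝ] F →L[ℝ] G) (ha : Integrable a μ) (ha' : Integrable a' μ') (hb : Integrable b ν)
    (hb' : Integrable b' ν') (hα : ∀ c, supportIntegral μ a c ≤ supportIntegral μ' a' c)
    (hβ : ∀ c, supportIntegral ν b c ≤ supportIntegral ν' b' c) (c : StrongDual ℝ G) :
    supportIntegral (μ.prod ν) (fun p => M (a p.1) (b p.2)) c ≤
      supportIntegral (μ'.prod ν') (fun p => M (a' p.1) (b' p.2)) c := by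
  calc supportIntegral (μ.prod ν) (fun p => M (a p.1) (b p.2)) c
      ≤ supportIntegral (μ'.prod ν) (fun p => M (a' p.1) (b p.2)) c :=
        supportIntegral_prod_mono_left M ha ha' hb hα c
    _ = supportIntegral (ν.prod μ') (fun p => M.flip (b p.1) (a' p.2)) c :=
        (supportIntegral_prod_flip M c).symm
    _ ≤ supportIntegral (ν'.prod μ') (fun p => M.flip (b' p.1) (a' p.2)) c :=
        supportIntegral_prod_mono_left M.flip hb hb' ha' hβ c
    _ = supportIntegral (μ'.prod ν') (fun p => M (a' p.1) (b' p.2)) c :=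
        supportIntegral_prod_flip M c

lemma stronglyMeasurable_prod_bilin (M : E →L[ℝ] F →L[ℝ] G) (ham : StronglyMeasurable a)
    (hbm : StronglyMeasurable b) : StronglyMeasurable fun p : S × T => M (a p.1) (b p.2) :=
  M.continuous₂.comp_stronglyMeasurable <|
    (ham.comp_measurable measurable_fst).prodMk (hbm.comp_measurable measurable_snd)

theorem lorenzHull_product_well_defined_general [FiniteDimensional ℝ E] [FiniteDimensional ℝ F]
    [FiniteDimensional ℝ G] (M : E →L[ℝ] F →L[ℝ] G) {α : VectorMeasure S E}
    {α' : VectorMeasure S' E} {β : VectorMeasure T F} {β' : VectorMeasure T' F}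
    (hα : convexHull ℝ (range α) ⊆ convexHull ℝ (range α'))
    (hβ : convexHull ℝ (range β) ⊆ convexHull ℝ (range β')) :
    convexHull ℝ (range (α.prod β M)) ⊆ convexHull ℝ (range (α'.prod β' M)) := by
  have := FiniteDimensional.complete ℝ E
  have := FiniteDimensional.complete ℝ F
  have := FiniteDimensional.complete ℝ G
  obtain ⟨μ, a, _, ham, ha, rfl⟩ := exists_eq_withDensityᵥ α
  obtain ⟨μ', a', _, ham', ha', rfl⟩ := exists_eq_withDensityᵥ α'
  obtain ⟨ν, b, _, hbm, hb, rfl⟩ := exists_eq_withDensityᵥ β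
  obtain ⟨ν', b', _, hbm', hb', rfl⟩ := exists_eq_withDensityᵥ β'
  rw [convexHull_range_withDensityᵥ_subset_iff ham ha ham' ha'] at hα
  rw [convexHull_range_withDensityᵥ_subset_iff hbm hb hbm' hb'] at hβ
  rw [withDensityᵥ_prod M ha hb, withDensityᵥ_prod M ha' hb',
    convexHull_range_withDensityᵥ_subset_iff
      (stronglyMeasurable_prod_bilin M ham hbm) (integrable_prod_bilin M ha hb)
      (stronglyMeasurable_prod_bilin M ham' hbm') (integrable_prod_bilin M ha' hb')]
  exact supportIntegral_prod_mono M ha ha' hb hb' hα hβ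

end Product

/-- The vector measure in `ℝ^ι` whose coordinates are the signed measures `α i`. -/
def vectorMeasurePi {ι : Type*} (α : ι → SignedMeasure X) : VectorMeasure X (ι → ℝ) where
  measureOf' A i := α i A
  empty' := funext fun i => (α i).empty
  not_measurable' _ hA := funext fun i => (α i).not_measurable hA
  m_iUnion' _ hf hd := Pi.hasSum.2 fun i => (α i).m_iUnion hf hd

lemma lorenzHull_eq_convexHull_range {n : ℕ} (α : Fin n → SignedMeasure X) :
    lorenzHull α = convexHull ℝ (range (vectorMeasurePi α)) := by
  rw [lorenzHull, range_vectorMeasure_eq_image]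
  congr 1 with x
  exact exists_congr fun A => and_congr_right fun _ => eq_comm

lemma vectorMeasurePi_prod_eq {ι S T : Type*} [Fintype ι] [MeasurableSpace S] [MeasurableSpace T]
    {α : ι → SignedMeasure S} {β : ι → SignedMeasure T} {ω : ι → SignedMeasure (S × T)}
    (hω : ∀ i A B, MeasurableSet A → MeasurableSet B → ω i (A ×ˢ B) = α i A * β i B) :
    (vectorMeasurePi α).prod (vectorMeasurePi β) (ContinuousLinearMap.mul ℝ (ι → ℝ)) =
      vectorMeasurePi ω :=
  VectorMeasure.prod_eq_of_forall_apply_prod fun A B hA hB => funext fun i => hω i A B hA hB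

end

theorem lorenzHull_product_well_defined
    {n : ℕ} {S S' T T' : Type*}
    [MeasurableSpace S] [MeasurableSpace S'] [MeasurableSpace T] [MeasurableSpace T']
    (α : Fin n → SignedMeasure S) (α' : Fin n → SignedMeasure S')
    (β : Fin n → SignedMeasure T) (β' : Fin n → SignedMeasure T')
    (ω : Fin n → SignedMeasure (S × T))
    (hω : ∀ i A B, MeasurableSet A → MeasurableSet B →
      ω i (A ×ˢ B) = α i A * β i B)
    (ω' : Fin n → SignedMeasure (S' × T'))
    (hω' : ∀ i A B, MeasurableSet A → MeasurableSet B →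
      ω' i (A ×ˢ B) = α' i A * β' i B)
    (hα : lorenzHull α = lorenzHull α') (hβ : lorenzHull β = lorenzHull β') :
    lorenzHull ω = lorenzHull ω' := by
  simp only [lorenzHull_eq_convexHull_range, ← vectorMeasurePi_prod_eq hω,
    ← vectorMeasurePi_prod_eq hω'] at hα hβ ⊢
  exact (lorenzHull_product_well_defined_general _ hα.subset hβ.subset).antisymm
    (lorenzHull_product_well_defined_general _ hα.superset hβ.superset)
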